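/- arXiv:2509.21174 — 2 statements merged into one kernel-verified Lean document; each statement's English description precedes it below -/
import Mathlib

section
/- Let A and B be positive semidefinite d×d matrices, and let the noiseless optimal error with Gaussian covariates of covariance C be Ē(C; 0) := E[ inf_{l ∈ ℝⁿ} ‖X - Σᵢ lᵢ Xᵢ‖² ] where X, X_1,…,X_n are i.i.d. N(0, C), and more generally Ē(C; s²) := E[ inf_l { ‖X - Σᵢ lᵢ Xᵢ‖² + s² ‖l‖² } ]. Then Ē(A + B; 0) ≤ Ē(A; Tr(B)) + Tr(B). -/
open Matrix MeasureTheory ProbabilityTheory BigOperators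

/-!
A sample from `N(0, A + B)` is the sum of independent samples from `N(0, A)` and `N(0, B)`. Fix the
first one, `y`, and a coefficient vector `l`. The residual of the second one is a sum of independent
centered vectors with coefficients `(1, -l)`, so adding it raises the expected squared residual by
`(1 + ‖l‖²) Tr B`: the noiseless loss of `l` at `A + B` becomes its loss at `y` with regularization
`Tr B`, plus `Tr B`. Since the expectation of an infimum is at most the infimum of the expectations,
it remains to minimize over `l` and to average over `y`.
-/

open WithLp
open scoped RealInnerProductSpace

section SecondMoments

variable {Ω E κ : Type*} [MeasurableSpace Ω] {P : Measure Ω} [IsProbabilityMeasure P]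
  [NormedAddCommGroup E] [InnerProductSpace ℝ E] [CompleteSpace E]
  [MeasurableSpace E] [BorelSpace E]

lemma integral_norm_add_sq_of_indepFun {X Y : Ω → E} (hX : MemLp X 2 P) (hY : MemLp Y 2 P)
    (hXY : X ⟂ᵢ[P] Y) (hY0 : ∫ ω, Y ω ∂P = 0) :
    ∫ ω, ‖X ω + Y ω‖ ^ 2 ∂P = ∫ ω, ‖X ω‖ ^ 2 ∂P + ∫ ω, ‖Y ω‖ ^ 2 ∂P := by
  have hX1 : Integrable X P := hX.integrable one_le_two
  have hY1 : Integrable Y P := hY.integrable one_le_two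
  have hinner : Integrable (fun ω => 2 * ⟪X ω, Y ω⟫) P :=
    (hXY.integrable_bilin hX1 hY1 (innerSL ℝ)).const_mul 2
  have hcross : ∫ ω, ⟪X ω, Y ω⟫ ∂P = 0 := by
    simpa [hY0] using! hXY.integral_bilin hX1 hY1 (innerSL ℝ)
  have hX2 := hX.integrable_norm_pow two_ne_zero
  have hY2 := hY.integrable_norm_pow two_ne_zero
  simp_rw [norm_add_sq_real]
  rw [integral_add (hX2.fun_add hinner) hY2, integral_add hX2 hinner, integral_const_mul, hcross,
    mul_zero, add_zero]

lemma integral_norm_const_add_sum_sq_of_iIndepFun [SecondCountableTopology E]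
    {X : κ → Ω → E} (hX : ∀ k, MemLp (X k) 2 P) (hindep : iIndepFun X P)
    (hX0 : ∀ k, ∫ ω, X k ω ∂P = 0) (a : E) (s : Finset κ) :
    ∫ ω, ‖a + ∑ k ∈ s, X k ω‖ ^ 2 ∂P = ‖a‖ ^ 2 + ∑ k ∈ s, ∫ ω, ‖X k ω‖ ^ 2 ∂P := by
  classical
  induction s using Finset.induction_on with
  | empty => simp
  | insert k s hk ih =>
    have hsum : (fun ω => a + ∑ j ∈ s, X j ω) ⟂ᵢ[P] X k := by
      have := (hindep.indepFun_finsetSum_of_notMem₀ (fun j => (hX j).aemeasurable) hk).comp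
        (measurable_const_add a) measurable_id
      simpa only [Function.comp_def, Finset.sum_apply, id] using this
    have hL2 : MemLp (fun ω => a + ∑ j ∈ s, X j ω) 2 P :=
      (memLp_const a).add (memLp_finsetSum s fun j _ => hX j)
    simp_rw [Finset.sum_insert hk, add_comm (X k _), ← add_assoc]
    rw [integral_norm_add_sq_of_indepFun hL2 (hX k) hsum (hX0 k), ih]
    ring

end SecondMoments

section Pi

variable {E κ : Type*} [Fintype κ] [NormedAddCommGroup E] [MeasurableSpace E]
  {β : Measure E} [IsProbabilityMeasure β]

lemma memLp_smul_eval_pi [NormedSpace ℝ E] (hβ : MemLp id 2 β) (c : κ → ℝ) (k : κ) :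
    MemLp (fun b : κ → E => c k • b k) 2 (Measure.pi fun _ => β) :=
  (hβ.comp_measurePreserving (measurePreserving_eval (fun _ => β) k)).const_smul (c k)

lemma integral_norm_const_add_sum_smul_sq_pi [InnerProductSpace ℝ E] [CompleteSpace E]
    [BorelSpace E] [SecondCountableTopology E] (hβ : MemLp id 2 β) (hβ0 : ∫ x, x ∂β = 0)
    (a : E) (c : κ → ℝ) :
    ∫ b, ‖a + ∑ k, c k • b k‖ ^ 2 ∂(Measure.pi fun _ => β) =
      ‖a‖ ^ 2 + (∑ k, c k ^ 2) * ∫ x, ‖x‖ ^ 2 ∂β := by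
  have hindep : iIndepFun (fun k (b : κ → E) => c k • b k) (Measure.pi fun _ => β) :=
    iIndepFun_pi (X := fun k x => c k • x) fun k => by fun_prop
  have hcentered (k : κ) : ∫ b, c k • b k ∂(Measure.pi fun _ => β) = 0 := by
    rw [integral_smul, integral_eval, hβ0, smul_zero]
  have hsecond (k : κ) :
      ∫ b, ‖c k • b k‖ ^ 2 ∂(Measure.pi fun _ => β) = c k ^ 2 * ∫ x, ‖x‖ ^ 2 ∂β := by
    simp_rw [norm_smul, mul_pow, Real.norm_eq_abs, sq_abs]
    rw [integral_const_mul,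
      integral_comp_eval (μ := fun _ => β) (f := fun x => ‖x‖ ^ 2) (by fun_prop)]
  rw [integral_norm_const_add_sum_sq_of_iIndepFun (memLp_smul_eval_pi hβ c) hindep hcentered]
  simp_rw [hsecond, Finset.sum_mul]

end Pi

section Gaussian

variable {ι κ : Type*} [Fintype ι] [DecidableEq ι] [Fintype κ] {A B S : Matrix ι ι ℝ}

lemma multivariateGaussian_conv (hA : A.PosSemidef) (hB : B.PosSemidef)
    (a b : EuclideanSpace ℝ ι) :
    multivariateGaussian a A ∗ multivariateGaussian b B = multivariateGaussian (a + b) (A + B) := by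
  refine Measure.ext_of_charFun (funext fun t => ?_)
  simp only [charFun_conv, charFun_multivariateGaussian, hA, hB, hA.add hB]
  rw [← Complex.exp_add, inner_add_right, add_mulVec, dotProduct_add]
  push_cast
  ring_nf

lemma pi_conv_pi {E : κ → Type*} [∀ k, NormedAddCommGroup (E k)] [∀ k, NormedSpace ℝ (E k)]
    [∀ k, CompleteSpace (E k)] [∀ k, SecondCountableTopology (E k)] [∀ k, MeasurableSpace (E k)]
    [∀ k, BorelSpace (E k)] (μ ν : ∀ k, Measure (E k)) [∀ k, IsFiniteMeasure (μ k)]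
    [∀ k, IsFiniteMeasure (ν k)] :
    Measure.pi μ ∗ Measure.pi ν = Measure.pi fun k => μ k ∗ ν k := by
  classical
  refine Measure.ext_of_charFunDual (funext fun L => ?_)
  simp only [charFunDual_conv, charFunDual_pi, Finset.prod_mul_distrib]

lemma integral_norm_sq_multivariateGaussian (hS : S.PosSemidef) :
    ∫ x, ‖x‖ ^ 2 ∂(multivariateGaussian 0 S) = S.trace := by
  have hcoord (i : ι) : MemLp (fun x : EuclideanSpace ℝ ι => x i) 2 (multivariateGaussian 0 S) :=
    IsGaussian.memLp_two_id.eval_piLp i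
  have hmean (i : ι) : ∫ x, x i ∂(multivariateGaussian 0 S) = 0 := by
    have := (EuclideanSpace.proj (𝕜 := ℝ) i).integral_comp_comm
      (IsGaussian.integrable_id (μ := multivariateGaussian 0 S))
    simpa using this
  have hvar (i : ι) : ∫ x, x i ^ 2 ∂(multivariateGaussian 0 S) = S i i := by
    rw [← variance_of_integral_eq_zero (by fun_prop) (hmean i),
      variance_eval_multivariateGaussian hS]
  simp_rw [EuclideanSpace.real_norm_sq_eq]
  rw [integral_finsetSum _ fun i _ => (hcoord i).integrable_sq]
  exact Finset.sum_congr rfl fun i _ => hvar i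

lemma map_eq_pi_multivariateGaussian {Ω : Type*} [MeasurableSpace Ω] {μ : Measure Ω}
    [IsFiniteMeasure μ] {Z : Ω → κ → EuclideanSpace ℝ ι} (hZ : AEMeasurable Z μ)
    {S : κ → Matrix ι ι ℝ} (hS : ∀ k, (S k).PosSemidef)
    (h : ∀ u : κ → EuclideanSpace ℝ ι, μ.map (fun ω => ∑ k, ⟪Z ω k, u k⟫) =
      gaussianReal 0 (∑ k, u k ⬝ᵥ S k *ᵥ u k).toNNReal) :
    μ.map Z = Measure.pi fun k => multivariateGaussian 0 (S k) := by
  refine charFun_eq_pi_iff.1 fun t => ?_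
  have hvar : 0 ≤ ∑ k, t k ⬝ᵥ S k *ᵥ t k :=
    Finset.sum_nonneg fun k _ => (hS k).dotProduct_mulVec_nonneg (t k)
  have hmarginal : charFun ((μ.map Z).map (toLp 2)) t =
      charFun (μ.map fun ω => ∑ k, ⟪Z ω k, t k⟫) 1 := by
    rw [AEMeasurable.map_map_of_aemeasurable (by fun_prop) hZ, charFun_apply, charFun_apply,
      integral_map (by fun_prop) (by fun_prop), integral_map (by fun_prop) (by fun_prop)]
    simp [PiLp.inner_apply]
  rw [hmarginal, h, charFun_gaussianReal]
  simp only [charFun_multivariateGaussian, hS]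
  simp [hvar, ← Complex.exp_sum, Finset.sum_div]

end Gaussian

section RidgeError

variable {E κ : Type*} [Fintype κ] [NormedAddCommGroup E] [NormedSpace ℝ E]

/-- The regularized loss `‖X - ∑ i, lᵢ Xᵢ‖² + t ‖l‖²` of the coefficient vector `l`. A sample is a
single family `z`, with target `X = z none` and predictors `Xᵢ = z (some i)`. -/
def ridgeLoss (t : ℝ) (l : κ → ℝ) (z : Option κ → E) : ℝ :=
  ‖z none - ∑ i, l i • z (some i)‖ ^ 2 + t * ∑ i, l i ^ 2

/-- The optimal regularized error of a sample, whose expectation over i.i.d. `N(0, C)` samples is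
the paper's `Ē(C; t)`. -/
noncomputable def ridgeError (t : ℝ) (z : Option κ → E) : ℝ :=
  ⨅ l : κ → ℝ, ridgeLoss t l z

/-- The coefficients `(1, -l)` which express the residual as a linear combination of the whole
sample. -/
def residualCoeff (l : κ → ℝ) (o : Option κ) : ℝ :=
  o.elim 1 fun i => -l i

variable {t : ℝ}

lemma ridgeLoss_nonneg (ht : 0 ≤ t) (l : κ → ℝ) (z : Option κ → E) : 0 ≤ ridgeLoss t l z := by
  unfold ridgeLoss
  positivity

lemma bddBelow_range_ridgeLoss (ht : 0 ≤ t) (z : Option κ → E) :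
    BddBelow (Set.range fun l : κ → ℝ => ridgeLoss t l z) :=
  ⟨0, Set.forall_mem_range.2 fun l => ridgeLoss_nonneg ht l z⟩

lemma ridgeError_le_ridgeLoss (ht : 0 ≤ t) (l : κ → ℝ) (z : Option κ → E) :
    ridgeError t z ≤ ridgeLoss t l z :=
  ciInf_le (bddBelow_range_ridgeLoss ht z) l

lemma ridgeError_nonneg (ht : 0 ≤ t) (z : Option κ → E) : 0 ≤ ridgeError t z :=
  Real.iInf_nonneg fun l => ridgeLoss_nonneg ht l z

lemma ridgeError_le_norm_sq (ht : 0 ≤ t) (z : Option κ → E) : ridgeError t z ≤ ‖z none‖ ^ 2 := by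
  simpa [ridgeLoss] using ridgeError_le_ridgeLoss ht 0 z

lemma ridgeLoss_eq_residualCoeff (l : κ → ℝ) (z : Option κ → E) :
    ridgeLoss t l z = ‖∑ o, residualCoeff l o • z o‖ ^ 2 + t * ∑ i, l i ^ 2 := by
  simp [ridgeLoss, residualCoeff, Fintype.sum_option, sub_eq_add_neg]

lemma sum_residualCoeff_sq (l : κ → ℝ) : ∑ o, residualCoeff l o ^ 2 = 1 + ∑ i, l i ^ 2 := by
  simp [residualCoeff, Fintype.sum_option]

lemma ridgeLoss_zero_add (l : κ → ℝ) (y b : Option κ → E) :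
    ridgeLoss 0 l (y + b) =
      ‖∑ o, residualCoeff l o • y o + ∑ o, residualCoeff l o • b o‖ ^ 2 := by
  simp [ridgeLoss_eq_residualCoeff, Finset.sum_add_distrib]

variable [MeasurableSpace E]

lemma integrable_ridgeLoss_zero_add_pi {β : Measure E} [IsProbabilityMeasure β]
    (hβ : MemLp id 2 β) (l : κ → ℝ) (y : Option κ → E) :
    Integrable (fun b => ridgeLoss 0 l (y + b)) (Measure.pi fun _ => β) := by
  have hnoise : MemLp (fun b : Option κ → E => ∑ o, residualCoeff l o • b o) 2
      (Measure.pi fun _ => β) :=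
    memLp_finsetSum _ fun o _ => memLp_smul_eval_pi hβ (residualCoeff l) o
  simp_rw [ridgeLoss_zero_add]
  exact ((memLp_const (∑ o, residualCoeff l o • y o)).add hnoise).integrable_norm_pow two_ne_zero

variable [BorelSpace E] [SecondCountableTopology E]

lemma measurable_ridgeError (ht : 0 ≤ t) :
    Measurable (ridgeError t : (Option κ → E) → ℝ) := by
  refine (upperSemicontinuous_ciInf (bddBelow_range_ridgeLoss ht) fun l =>
    Continuous.upperSemicontinuous ?_).measurable
  unfold ridgeLoss
  fun_prop

lemma integrable_ridgeError_comp {Ω : Type*} [MeasurableSpace Ω] {P : Measure Ω} (ht : 0 ≤ t)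
    {Z : Ω → Option κ → E} (hZ : AEMeasurable Z P) (hL2 : MemLp (fun ω => Z ω none) 2 P) :
    Integrable (fun ω => ridgeError t (Z ω)) P := by
  refine (hL2.integrable_norm_pow two_ne_zero).mono'
    ((measurable_ridgeError ht).comp_aemeasurable hZ).aestronglyMeasurable (ae_of_all _ fun ω => ?_)
  rw [Real.norm_of_nonneg (ridgeError_nonneg ht _)]
  exact ridgeError_le_norm_sq ht _

end RidgeError

section RidgeErrorSplitting

variable {E κ : Type*} [Fintype κ] [NormedAddCommGroup E] [InnerProductSpace ℝ E] [CompleteSpace E]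
  [MeasurableSpace E] [BorelSpace E] [SecondCountableTopology E]
  {β : Measure E} [IsProbabilityMeasure β]

lemma integral_ridgeLoss_zero_add_pi (hβ : MemLp id 2 β) (hβ0 : ∫ x, x ∂β = 0) (l : κ → ℝ)
    (y : Option κ → E) :
    ∫ b, ridgeLoss 0 l (y + b) ∂(Measure.pi fun _ => β) =
      ridgeLoss (∫ x, ‖x‖ ^ 2 ∂β) l y + ∫ x, ‖x‖ ^ 2 ∂β := by
  simp_rw [ridgeLoss_zero_add]
  rw [integral_norm_const_add_sum_smul_sq_pi hβ hβ0, sum_residualCoeff_sq,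
    ridgeLoss_eq_residualCoeff]
  ring

lemma integral_ridgeError_zero_add_pi_le (hβ : MemLp id 2 β) (hβ0 : ∫ x, x ∂β = 0)
    (y : Option κ → E) :
    ∫ b, ridgeError 0 (y + b) ∂(Measure.pi fun _ => β) ≤
      ridgeError (∫ x, ‖x‖ ^ 2 ∂β) y + ∫ x, ‖x‖ ^ 2 ∂β := by
  rw [← sub_le_iff_le_add]
  refine le_ciInf fun l => ?_
  rw [sub_le_iff_le_add, ← integral_ridgeLoss_zero_add_pi hβ hβ0]
  exact integral_mono_of_nonneg (ae_of_all _ fun b => ridgeError_nonneg le_rfl _)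
    (integrable_ridgeLoss_zero_add_pi hβ l y)
    (ae_of_all _ fun b => ridgeError_le_ridgeLoss le_rfl l _)

theorem integral_ridgeError_zero_conv_pi_le {ν : Measure (Option κ → E)} [IsProbabilityMeasure ν]
    (hν : MemLp (fun y => y none) 2 ν) (hβ : MemLp id 2 β) (hβ0 : ∫ x, x ∂β = 0) :
    ∫ z, ridgeError 0 z ∂(ν ∗ Measure.pi fun _ => β) ≤
      ∫ y, ridgeError (∫ x, ‖x‖ ^ 2 ∂β) y ∂ν + ∫ x, ‖x‖ ^ 2 ∂β := by
  set ρ : Measure (Option κ → E) := Measure.pi fun _ => β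
  have hβ2 : 0 ≤ ∫ x, ‖x‖ ^ 2 ∂β := integral_nonneg fun x => sq_nonneg _
  have hρ : MemLp (fun b : Option κ → E => b none) 2 ρ :=
    hβ.comp_measurePreserving (measurePreserving_eval (fun _ => β) none)
  have hsum : Integrable (fun p => ridgeError 0 (p.1 + p.2)) (ν.prod ρ) :=
    integrable_ridgeError_comp le_rfl (by fun_prop) ((hν.comp_fst ρ).add (hρ.comp_snd ν))
  have hconv : Integrable (ridgeError 0) (ν ∗ ρ) :=
    (integrable_map_measure (measurable_ridgeError le_rfl).aestronglyMeasurable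
      (by fun_prop)).2 hsum
  have hridge : Integrable (ridgeError (∫ x, ‖x‖ ^ 2 ∂β)) ν :=
    integrable_ridgeError_comp hβ2 aemeasurable_id hν
  calc ∫ z, ridgeError 0 z ∂(ν ∗ ρ)
      = ∫ y, ∫ b, ridgeError 0 (y + b) ∂ρ ∂ν := integral_conv hconv
    _ ≤ ∫ y, (ridgeError (∫ x, ‖x‖ ^ 2 ∂β) y + ∫ x, ‖x‖ ^ 2 ∂β) ∂ν :=
        integral_mono hsum.integral_prod_left (hridge.add (integrable_const _))
          (integral_ridgeError_zero_add_pi_le hβ hβ0)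
    _ = ∫ y, ridgeError (∫ x, ‖x‖ ^ 2 ∂β) y ∂ν + ∫ x, ‖x‖ ^ 2 ∂β := by
        simp [integral_add hridge (integrable_const _)]

end RidgeErrorSplitting

section EuclideanSample

variable {ι κ Ω : Type*} [MeasurableSpace Ω] {μ : Measure Ω} {X : Ω → ι → ℝ} {Xi : κ → Ω → ι → ℝ}

/-- The sample with target `x` and predictors `xs`, as a family of Euclidean vectors, so that its
losses are measured in the `ℓ²` norm instead of the sup norm of `ι → ℝ`. -/
def euclideanSample (x : ι → ℝ) (xs : κ → ι → ℝ) (o : Option κ) : EuclideanSpace ℝ ι :=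
  toLp 2 (o.elim x xs)

lemma aemeasurable_euclideanSample [Countable κ] (hX : AEMeasurable X μ)
    (hXi : ∀ i, AEMeasurable (Xi i) μ) :
    AEMeasurable (fun ω => euclideanSample (X ω) fun i => Xi i ω) μ := by
  refine aemeasurable_pi_lambda _ fun o => ?_
  cases o with
  | none => exact (by fun_prop : AEMeasurable (fun ω => toLp 2 (X ω)) μ)
  | some i => exact (by fun_prop : AEMeasurable (fun ω => toLp 2 (Xi i ω)) μ)

variable [Fintype ι] [Fintype κ]

lemma ridgeError_euclideanSample (t : ℝ) (x : ι → ℝ) (xs : κ → ι → ℝ) :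
    ridgeError t (euclideanSample x xs) =
      ⨅ l : κ → ℝ, ((∑ j, (x j - (∑ i, l i • xs i) j) ^ 2) + t * ∑ i, l i ^ 2) := by
  simp [ridgeError, ridgeLoss, euclideanSample, EuclideanSpace.real_norm_sq_eq]

lemma integral_ridgeError_map_euclideanSample (hX : AEMeasurable X μ)
    (hXi : ∀ i, AEMeasurable (Xi i) μ) {t : ℝ} (ht : 0 ≤ t) :
    ∫ z, ridgeError t z ∂(μ.map fun ω => euclideanSample (X ω) fun i => Xi i ω) =
      ∫ ω, ⨅ l : κ → ℝ,
        ((∑ j, (X ω j - (∑ i, l i • Xi i ω) j) ^ 2) + t * ∑ i, l i ^ 2) ∂μ := by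
  simp_rw [← ridgeError_euclideanSample]
  exact integral_map (aemeasurable_euclideanSample hX hXi)
    (measurable_ridgeError ht).aestronglyMeasurable

lemma map_euclideanSample_eq_pi [DecidableEq ι] [IsFiniteMeasure μ] {S : Matrix ι ι ℝ}
    (hS : S.PosSemidef) (hX : AEMeasurable X μ) (hXi : ∀ i, AEMeasurable (Xi i) μ)
    (hgauss : ∀ (w : ι → ℝ) (v : κ → ι → ℝ),
      μ.map (fun ω => w ⬝ᵥ X ω + ∑ i, v i ⬝ᵥ Xi i ω) =
        gaussianReal 0 (w ⬝ᵥ S *ᵥ w + ∑ i, v i ⬝ᵥ S *ᵥ v i).toNNReal) :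
    μ.map (fun ω => euclideanSample (X ω) fun i => Xi i ω) =
      Measure.pi fun _ => multivariateGaussian 0 S := by
  refine map_eq_pi_multivariateGaussian (aemeasurable_euclideanSample hX hXi) (fun _ => hS)
    fun u => ?_
  simpa [Fintype.sum_option, euclideanSample, EuclideanSpace.inner_eq_star_dotProduct] using
    hgauss (u none) fun i => u (some i)

end EuclideanSample

theorem integral_ridgeError_gaussian_add_le {ι κ : Type*} [Fintype ι] [DecidableEq ι]
    [Fintype κ] {A B : Matrix ι ι ℝ} (hA : A.PosSemidef) (hB : B.PosSemidef) :
    ∫ z, ridgeError 0 z ∂(Measure.pi fun _ : Option κ => multivariateGaussian 0 (A + B)) ≤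
      ∫ z, ridgeError B.trace z ∂(Measure.pi fun _ : Option κ => multivariateGaussian 0 A) +
        B.trace := by
  have hA2 : MemLp (fun y : Option κ → EuclideanSpace ℝ ι => y none) 2
      (Measure.pi fun _ => multivariateGaussian 0 A) :=
    IsGaussian.memLp_two_id.comp_measurePreserving (measurePreserving_eval _ none)
  have hsplit : (Measure.pi fun _ : Option κ => multivariateGaussian 0 (A + B)) =
      (Measure.pi fun _ => multivariateGaussian 0 A) ∗
        Measure.pi fun _ => multivariateGaussian 0 B := by
    rw [pi_conv_pi]
    simp_rw [multivariateGaussian_conv hA hB, add_zero]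
  rw [hsplit, ← integral_norm_sq_multivariateGaussian hB]
  exact integral_ridgeError_zero_conv_pi_le hA2 IsGaussian.memLp_two_id
    integral_id_multivariateGaussian

theorem noiseless_error_splitting_general {ι κ Ω Ω' : Type*} [Fintype ι] [Fintype κ]
    [MeasurableSpace Ω] {μ : Measure Ω} [IsFiniteMeasure μ]
    [MeasurableSpace Ω'] {μ' : Measure Ω'} [IsFiniteMeasure μ']
    {A B : Matrix ι ι ℝ} (hA : A.PosSemidef) (hB : B.PosSemidef)
    {X : Ω → ι → ℝ} {Xi : κ → Ω → ι → ℝ}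
    (hX : AEMeasurable X μ) (hXi : ∀ i, AEMeasurable (Xi i) μ)
    (hgaussX : ∀ (w : ι → ℝ) (v : κ → ι → ℝ),
      μ.map (fun ω => w ⬝ᵥ X ω + ∑ i, v i ⬝ᵥ Xi i ω) =
        gaussianReal 0 (w ⬝ᵥ (A + B) *ᵥ w + ∑ i, v i ⬝ᵥ (A + B) *ᵥ v i).toNNReal)
    {Y : Ω' → ι → ℝ} {Yi : κ → Ω' → ι → ℝ}
    (hY : AEMeasurable Y μ') (hYi : ∀ i, AEMeasurable (Yi i) μ')
    (hgaussY : ∀ (w : ι → ℝ) (v : κ → ι → ℝ),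
      μ'.map (fun ω => w ⬝ᵥ Y ω + ∑ i, v i ⬝ᵥ Yi i ω) =
        gaussianReal 0 (w ⬝ᵥ A *ᵥ w + ∑ i, v i ⬝ᵥ A *ᵥ v i).toNNReal) :
    ∫ ω, ⨅ l : κ → ℝ, ∑ j, (X ω j - (∑ i, l i • Xi i ω) j) ^ 2 ∂μ ≤
      ∫ ω, ⨅ l : κ → ℝ,
        ((∑ j, (Y ω j - (∑ i, l i • Yi i ω) j) ^ 2) + B.trace * ∑ i, l i ^ 2) ∂μ' + B.trace := by
  classical
  have hXerror := integral_ridgeError_map_euclideanSample hX hXi le_rfl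
  have hYerror := integral_ridgeError_map_euclideanSample hY hYi hB.trace_nonneg
  rw [map_euclideanSample_eq_pi (hA.add hB) hX hXi hgaussX] at hXerror
  rw [map_euclideanSample_eq_pi hA hY hYi hgaussY] at hYerror
  simp only [zero_mul, add_zero] at hXerror
  rw [← hXerror, ← hYerror]
  exact integral_ridgeError_gaussian_add_le hA hB

/-- **Splitting the noiseless Gaussian error.** Let `A, B ⪰ 0`. Let `X, X₁,…,Xₙ` be i.i.d.
`N(0, A+B)` and `Y, Y₁,…,Yₙ` be i.i.d. `N(0, A)` (each family characterized through its
joint linear marginals). Then the noiseless optimal error at covariance `A+B` is bounded by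
the noisy optimal error at covariance `A` with noise level `Tr B`, plus `Tr B`:
`Ē(A+B; 0) ≤ Ē(A; Tr B) + Tr B`. -/
theorem noiseless_error_splitting (n d : ℕ)
    {Ω : Type*} [MeasurableSpace Ω] (μ : Measure Ω) [IsProbabilityMeasure μ]
    (A B : Matrix (Fin d) (Fin d) ℝ) (hA : A.PosSemidef) (hB : B.PosSemidef)
    (X : Ω → (Fin d → ℝ)) (Xi : Fin n → Ω → (Fin d → ℝ))
    (hXmeas : Measurable X) (hXimeas : ∀ i, Measurable (Xi i))
    (hgaussX : ∀ (w : Fin d → ℝ) (v : Fin n → (Fin d → ℝ)),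
      μ.map (fun ω => w ⬝ᵥ X ω + ∑ i, v i ⬝ᵥ Xi i ω) =
        gaussianReal 0 (Real.toNNReal
          (w ⬝ᵥ (A + B).mulVec w + ∑ i, v i ⬝ᵥ (A + B).mulVec (v i))))
    (Y : Ω → (Fin d → ℝ)) (Yi : Fin n → Ω → (Fin d → ℝ))
    (hYmeas : Measurable Y) (hYimeas : ∀ i, Measurable (Yi i))
    (hgaussY : ∀ (w : Fin d → ℝ) (v : Fin n → (Fin d → ℝ)),
      μ.map (fun ω => w ⬝ᵥ Y ω + ∑ i, v i ⬝ᵥ Yi i ω) =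
        gaussianReal 0 (Real.toNNReal
          (w ⬝ᵥ A.mulVec w + ∑ i, v i ⬝ᵥ A.mulVec (v i))))
    (hintX : Integrable
      (fun ω => ⨅ l : Fin n → ℝ, ∑ j, (X ω j - (∑ i, l i • Xi i ω) j) ^ 2) μ)
    (hintY : Integrable
      (fun ω => ⨅ l : Fin n → ℝ,
        ((∑ j, (Y ω j - (∑ i, l i • Yi i ω) j) ^ 2) + B.trace * ∑ i, (l i) ^ 2)) μ) :
    (∫ ω, ⨅ l : Fin n → ℝ, ∑ j, (X ω j - (∑ i, l i • Xi i ω) j) ^ 2 ∂μ) ≤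
      (∫ ω, ⨅ l : Fin n → ℝ,
        ((∑ j, (Y ω j - (∑ i, l i • Yi i ω) j) ^ 2) + B.trace * ∑ i, (l i) ^ 2) ∂μ) +
        B.trace := by
  exact noiseless_error_splitting_general hA hB hXmeas.aemeasurable
    (fun i => (hXimeas i).aemeasurable) hgaussX hYmeas.aemeasurable
    (fun i => (hYimeas i).aemeasurable) hgaussY
end

section
/- Suppose n > d + 1 (the underparametrized regime) and X, X_1, …, X_n are i.i.d. N(0, Σ) with Σ ∈ ℝ^{d×d} positive definite. Then Ē(Σ; σ²) := E[ inf_{l ∈ ℝⁿ} { ‖X - Σᵢ lᵢ Xᵢ‖² + σ² ‖l‖² } ] satisfies Ē(Σ; σ²) ≤ σ² d / (n - d - 1). -/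
open Matrix MeasureTheory ProbabilityTheory BigOperators

/-!
Write `Σ = BᵀB`; the data have the law of `Bᵀz` and of `Bᵀ` applied to the rows of a matrix with
columns `v_1, …, v_d`, where `z` and the `v_k` are independent standard Gaussian vectors of `ℝᵈ` and
`ℝⁿ`. Any `l` with `⟪v_k, l⟫ = z_k` for all `k` reconstructs `X` exactly, so the infimum is at most
`σ² ‖l‖²`. For the solution of least norm, `‖l‖² = zᵀ W⁻¹ z` with `W` the Gram matrix of the `v_k`,
and averaging over `z` leaves `σ² tr W⁻¹`.

The diagonal entry `(W⁻¹)_kk` is the inverse squared distance from `v_k` to the span of the other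
`v_j`, which is the inverse of a `χ²` variable with `n - d + 1` degrees of freedom. Its mean is
`1 / (n - d - 1)`: writing `1 / s = ∫ exp (-t s) dt` over `t > 0` turns the expectation of
`1 / χ²_m` into `∫ (1 + 2 t) ^ (-m / 2) dt = 1 / (m - 2)`.
-/

open Module Set
open scoped RealInnerProductSpace ENNReal Real

section InverseChiSquare

theorem lintegral_Ioi_exp_neg_mul {s : ℝ} (hs : 0 ≤ s) :
    ∫⁻ t in Ioi (0 : ℝ), ENNReal.ofReal (Real.exp (-(t * s))) = (ENNReal.ofReal s)⁻¹ := by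
  rcases hs.eq_or_lt with rfl | hs
  · simp
  have hneg : -s < 0 := neg_neg_of_pos hs
  simp_rw [mul_comm _ s, ← neg_mul]
  rw [← ofReal_integral_eq_lintegral_ofReal (integrableOn_exp_mul_Ioi hneg 0)
      (ae_of_all _ fun t => (Real.exp_pos _).le), integral_exp_mul_Ioi hneg]
  simp [ENNReal.ofReal_inv_of_pos hs]

theorem lintegral_Ioi_one_add_two_mul_rpow {a : ℝ} (ha : 1 < a) :
    ∫⁻ t in Ioi (0 : ℝ), ENNReal.ofReal ((1 + 2 * t) ^ (-a)) =
      ENNReal.ofReal (1 / (2 * (a - 1))) := by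
  have hpos : ∀ t ∈ Ici (0 : ℝ), 0 < 1 + 2 * t := fun t ht => by
    have : 0 ≤ t := ht
    positivity
  set g : ℝ → ℝ := fun t => -((1 + 2 * t) ^ (-(a - 1)) / (2 * (a - 1)))
  have hderiv : ∀ t ∈ Ici (0 : ℝ), HasDerivAt g ((1 + 2 * t) ^ (-a)) t := fun t ht => by
    have hlin : HasDerivAt (fun t : ℝ => 1 + 2 * t) 2 t := by
      simpa using ((hasDerivAt_id t).const_mul 2).const_add 1
    have hrpow := (hlin.rpow_const (p := -(a - 1)) (.inl (hpos t ht).ne')).div_const (2 * (a - 1))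
    refine hrpow.neg.congr_deriv ?_
    rw [show -(a - 1) - 1 = -a by ring]
    field [sub_ne_zero.2 ha.ne']
  have hcont := (hderiv 0 self_mem_Ici).continuousAt.continuousWithinAt (s := Ici 0)
  have hnonneg : ∀ t ∈ Ioi (0 : ℝ), 0 ≤ (1 + 2 * t) ^ (-a) := fun t ht =>
    Real.rpow_nonneg (hpos t (Ioi_subset_Ici_self ht)).le _
  have hlim : Filter.Tendsto g Filter.atTop (nhds 0) := by
    have hlin : Filter.Tendsto (fun t : ℝ => 1 + 2 * t) Filter.atTop Filter.atTop :=
      Filter.tendsto_atTop_add_const_left _ _ (Filter.tendsto_id.const_mul_atTop two_pos)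
    simpa [g] using (((tendsto_rpow_neg_atTop (sub_pos.2 ha)).comp hlin).div_const
      (2 * (a - 1))).neg
  have hderiv' : ∀ t ∈ Ioi (0 : ℝ), HasDerivAt g ((1 + 2 * t) ^ (-a)) t := fun t ht =>
    hderiv t (Ioi_subset_Ici_self ht)
  rw [← ofReal_integral_eq_lintegral_ofReal
      (integrableOn_Ioi_deriv_of_nonneg hcont hderiv' hnonneg hlim)
      ((ae_restrict_iff' measurableSet_Ioi).2 (ae_of_all _ hnonneg)),
    integral_Ioi_of_hasDerivAt_of_nonneg hcont hderiv' hnonneg hlim]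
  simp [g]

theorem lintegral_exp_neg_mul_sq_gaussianReal {t : ℝ} (ht : 0 ≤ t) :
    ∫⁻ x, ENNReal.ofReal (Real.exp (-(t * x ^ 2))) ∂gaussianReal 0 1 =
      ENNReal.ofReal ((1 + 2 * t) ^ (-(1 / 2) : ℝ)) := by
  have hdensity : ∀ x : ℝ, gaussianPDFReal 0 1 x • Real.exp (-(t * x ^ 2)) =
      (√(2 * π))⁻¹ * Real.exp (-(1 / 2 + t) * x ^ 2) := fun x => by
    simp only [gaussianPDFReal, NNReal.coe_one, mul_one, sub_zero, smul_eq_mul, mul_assoc,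
      ← Real.exp_add]
    ring_nf
  have hint : Integrable (fun x : ℝ => Real.exp (-(t * x ^ 2))) (gaussianReal 0 1) :=
    .of_bound (by fun_prop) 1 (ae_of_all _ fun x => by
      simpa using mul_nonneg ht (sq_nonneg x))
  rw [← ofReal_integral_eq_lintegral_ofReal hint (ae_of_all _ fun x => (Real.exp_pos _).le),
    integral_gaussianReal_eq_integral_smul one_ne_zero]
  simp_rw [hdensity]
  rw [integral_const_mul, integral_gaussian, ← Real.sqrt_inv, ← Real.sqrt_mul (by positivity),
    Real.rpow_neg (by positivity), ← Real.sqrt_eq_rpow, ← Real.sqrt_inv]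
  congr 2
  field

variable {E : Type*} [NormedAddCommGroup E] [InnerProductSpace ℝ E] [FiniteDimensional ℝ E]
  [MeasurableSpace E] [BorelSpace E]

theorem lintegral_exp_neg_mul_sq_norm_stdGaussian {t : ℝ} (ht : 0 ≤ t) :
    ∫⁻ x, ENNReal.ofReal (Real.exp (-(t * ‖x‖ ^ 2))) ∂stdGaussian E =
      ENNReal.ofReal ((1 + 2 * t) ^ (-(finrank ℝ E / 2) : ℝ)) := by
  have hprod : ∀ x : Fin (finrank ℝ E) → ℝ,
      ENNReal.ofReal (Real.exp (-(t * ‖∑ i, x i • stdOrthonormalBasis ℝ E i‖ ^ 2))) =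
        ∏ i, ENNReal.ofReal (Real.exp (-(t * x i ^ 2))) := fun x => by
    rw [← ENNReal.ofReal_prod_of_nonneg fun i _ => (Real.exp_pos _).le, ← Real.exp_sum,
      ← (stdOrthonormalBasis ℝ E).sum_sq_inner_right]
    simp [inner_sum, real_inner_smul_right, OrthonormalBasis.inner_eq_ite, Finset.mul_sum]
  rw [stdGaussian, lintegral_map (by fun_prop) (by fun_prop)]
  simp_rw [hprod]
  rw [lintegral_prod_eq_prod_lintegral_of_indepFun Finset.univ
    (fun i (x : Fin (finrank ℝ E) → ℝ) => ENNReal.ofReal (Real.exp (-(t * x i ^ 2))))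
    (iIndepFun_pi (X := fun _ x => ENNReal.ofReal (Real.exp (-(t * x ^ 2))))
      fun _ => by fun_prop) fun i => by fun_prop]
  have hmarg := fun i : Fin (finrank ℝ E) =>
    (measurePreserving_eval (fun _ => gaussianReal 0 1) i).lintegral_comp
      (f := fun x => ENNReal.ofReal (Real.exp (-(t * x ^ 2)))) (by fun_prop)
  simp_rw [hmarg, lintegral_exp_neg_mul_sq_gaussianReal ht]
  rw [Finset.prod_const, ← ENNReal.ofReal_pow (by positivity),
    ← Real.rpow_mul_natCast (by positivity), Finset.card_univ, Fintype.card_fin]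
  congr 2
  ring

theorem lintegral_inv_sq_norm_stdGaussian (hE : 2 < finrank ℝ E) :
    ∫⁻ x, (ENNReal.ofReal (‖x‖ ^ 2))⁻¹ ∂stdGaussian E =
      ENNReal.ofReal (1 / (finrank ℝ E - 2)) := by
  have hdim : (1 : ℝ) < finrank ℝ E / 2 := by
    rw [lt_div_iff₀ two_pos, one_mul]
    exact_mod_cast hE
  calc ∫⁻ x, (ENNReal.ofReal (‖x‖ ^ 2))⁻¹ ∂stdGaussian E
      = ∫⁻ x, (∫⁻ t in Ioi (0 : ℝ), ENNReal.ofReal (Real.exp (-(t * ‖x‖ ^ 2)))) ∂stdGaussian E := by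
        simp_rw [lintegral_Ioi_exp_neg_mul (sq_nonneg _)]
    _ = ∫⁻ t in Ioi (0 : ℝ), ∫⁻ x, ENNReal.ofReal (Real.exp (-(t * ‖x‖ ^ 2))) ∂stdGaussian E :=
        lintegral_lintegral_swap (by fun_prop)
    _ = ∫⁻ t in Ioi (0 : ℝ), ENNReal.ofReal ((1 + 2 * t) ^ (-(finrank ℝ E / 2) : ℝ)) :=
        setLIntegral_congr_fun measurableSet_Ioi fun t ht =>
          lintegral_exp_neg_mul_sq_norm_stdGaussian (le_of_lt ht)
    _ = ENNReal.ofReal (1 / (finrank ℝ E - 2)) := by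
        rw [lintegral_Ioi_one_add_two_mul_rpow hdim]
        congr 2
        ring

theorem map_orthogonalProjectionOnto_stdGaussian (K : Submodule ℝ E) :
    (stdGaussian E).map K.orthogonalProjectionOnto = stdGaussian K := by
  refine Measure.ext_of_charFun (funext fun t => ?_)
  have hpull : charFun ((stdGaussian E).map K.orthogonalProjectionOnto) t =
      charFun (stdGaussian E) t := by
    simp_rw [charFun_apply]
    rw [integral_map (by fun_prop) (by fun_prop)]
    simp
  rw [hpull, charFun_stdGaussian, charFun_stdGaussian, Submodule.coe_norm]

theorem lintegral_inv_sq_norm_orthogonalProjectionOnto_stdGaussian {K : Submodule ℝ E}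
    (hK : 2 < finrank ℝ K) :
    ∫⁻ x, (ENNReal.ofReal (‖K.orthogonalProjectionOnto x‖ ^ 2))⁻¹ ∂stdGaussian E =
      ENNReal.ofReal (1 / (finrank ℝ K - 2)) := by
  rw [← lintegral_inv_sq_norm_stdGaussian hK, ← map_orthogonalProjectionOnto_stdGaussian K,
    lintegral_map (by fun_prop) (by fun_prop)]

end InverseChiSquare

section UpdateCoordinate

variable {κ : Type*} [Fintype κ] [DecidableEq κ] {α : κ → Type*} [∀ k, MeasurableSpace (α k)]
  {ν : ∀ k, Measure (α k)} [∀ k, IsProbabilityMeasure (ν k)]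

theorem lintegral_pi_eq_lintegral_lintegral_update (k : κ) {f : (∀ k, α k) → ℝ≥0∞}
    (hf : Measurable f) :
    ∫⁻ v, f v ∂Measure.pi ν = ∫⁻ v, ∫⁻ y, f (Function.update v k y) ∂ν k ∂Measure.pi ν := by
  have hmeas : Measurable fun v => ∫⁻ y, f (Function.update v k y) ∂ν k :=
    (hf.comp measurable_update').lintegral_prod_right'
  refine lintegral_eq_of_lmarginal_eq {k} hf hmeas ?_
  simp [lmarginal_singleton]

theorem ae_pi_of_ae_ae_update (k : κ) {p : (∀ k, α k) → Prop} (hp : MeasurableSet {v | p v})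
    (h : ∀ᵐ v ∂Measure.pi ν, ∀ᵐ y ∂ν k, p (Function.update v k y)) :
    ∀ᵐ v ∂Measure.pi ν, p v := by
  change Measure.pi ν {v | p v}ᶜ = 0
  rw [← lintegral_indicator_one hp.compl, lintegral_pi_eq_lintegral_lintegral_update k
    (measurable_one.indicator hp.compl), lintegral_eq_zero_of_ae_eq_zero]
  filter_upwards [h] with v hv
  refine lintegral_eq_zero_of_ae_eq_zero ?_
  filter_upwards [hv] with y hy
  simp [hy]

end UpdateCoordinate

section LinearIndependence

theorem isOpen_setOfPred_linearIndepOn {𝕜 κ V : Type*} [NontriviallyNormedField 𝕜]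
    [CompleteSpace 𝕜] [Finite κ] [NormedAddCommGroup V] [NormedSpace 𝕜 V] (s : Set κ) :
    IsOpen {v : κ → V | LinearIndepOn 𝕜 v s} := by
  have hrestrict : Continuous fun (v : κ → V) (i : s) => v i := by fun_prop
  exact isOpen_setOfPred_linearIndependent.preimage hrestrict

theorem linearIndepOn_update_insert_iff {𝕜 κ V : Type*} [DivisionRing 𝕜] [DecidableEq κ]
    [AddCommGroup V] [Module 𝕜 V] {s : Set κ} {k : κ} (hk : k ∉ s) (v : κ → V) (y : V) :
    LinearIndepOn 𝕜 (Function.update v k y) (insert k s) ↔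
      LinearIndepOn 𝕜 v s ∧ y ∉ Submodule.span 𝕜 (v '' s) := by
  have heq : EqOn (Function.update v k y) v s := fun i hi =>
    Function.update_of_ne (ne_of_mem_of_not_mem hi hk) _ _
  rw [linearIndepOn_insert hk, linearIndepOn_congr heq, heq.image_eq, Function.update_self]

end LinearIndependence

section GeneralPosition

variable {κ E : Type*} [Fintype κ] [NormedAddCommGroup E] [NormedSpace ℝ E]
  [FiniteDimensional ℝ E] [MeasurableSpace E] [BorelSpace E] {ν : Measure E}
  [IsProbabilityMeasure ν]

theorem ae_linearIndepOn_pi (hν : ∀ K : Submodule ℝ E, K ≠ ⊤ → ν K = 0) (s : Finset κ)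
    (hs : s.card ≤ finrank ℝ E) :
    ∀ᵐ v ∂Measure.pi fun _ : κ => ν, LinearIndepOn ℝ v s := by
  classical
  induction s using Finset.induction_on with
  | empty => simp
  | insert k s hk ih =>
    rw [Finset.card_insert_of_notMem hk] at hs
    rw [Finset.coe_insert]
    refine ae_pi_of_ae_ae_update k (isOpen_setOfPred_linearIndepOn _).measurableSet ?_
    filter_upwards [ih (by omega)] with v hv
    have hproper : Submodule.span ℝ (v '' s) ≠ ⊤ := fun htop => by
      have hspan := finrank_span_finset_le_card (R := ℝ) (s.image v)
      have hcard := Finset.card_image_le (s := s) (f := v)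
      rw [Set.finrank, Finset.coe_image, htop, finrank_top] at hspan
      omega
    filter_upwards [measure_eq_zero_iff_ae_notMem.1 (hν _ hproper)] with y hy
    exact (linearIndepOn_update_insert_iff (mod_cast hk) v y).2 ⟨hv, hy⟩

theorem ae_linearIndependent_pi (hν : ∀ K : Submodule ℝ E, K ≠ ⊤ → ν K = 0)
    (hκ : Fintype.card κ ≤ finrank ℝ E) :
    ∀ᵐ v ∂Measure.pi fun _ : κ => ν, LinearIndependent ℝ v := by
  simpa [linearIndepOn_univ_iff] using ae_linearIndepOn_pi hν Finset.univ (by simpa using hκ)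

theorem stdGaussian_submodule_eq_zero {E : Type*} [NormedAddCommGroup E] [InnerProductSpace ℝ E]
    [FiniteDimensional ℝ E] [MeasurableSpace E] [BorelSpace E] {K : Submodule ℝ E}
    (hK : K ≠ ⊤) : stdGaussian E K = 0 := by
  obtain ⟨e, he, he0⟩ := Submodule.exists_mem_ne_zero_of_ne_bot
    (mt K.orthogonal_eq_bot_iff.1 hK)
  have hvar : (Var[innerSL ℝ e; stdGaussian E]).toNNReal ≠ 0 := by
    rw [variance_dual_stdGaussian, innerSL_apply_norm]
    simpa using he0
  have := nullSingletonClass_gaussianReal (μ := 0) hvar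
  have hker : (K : Set E) ⊆ innerSL ℝ e ⁻¹' {0} := fun x hx => by
    simpa using K.inner_left_of_mem_orthogonal hx he
  refine measure_mono_null hker ?_
  rw [← Measure.map_apply (by fun_prop) (measurableSet_singleton 0),
    IsGaussian.map_eq_gaussianReal, integral_strongDual_stdGaussian]
  exact measure_singleton 0

end GeneralPosition

section GramInverse

variable {κ E : Type*} [Fintype κ] [DecidableEq κ] [NormedAddCommGroup E] [InnerProductSpace ℝ E]

/-- The vector of least norm among the solutions `l` of the system `⟪v k, l⟫ = z k`, for linearly
independent `v`. It is encoded by its coefficients `(gram ℝ v)⁻¹ *ᵥ z` in the family `v`, which are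
junk when `v` is linearly dependent. -/
noncomputable def minNormSolution (v : κ → E) (z : κ → ℝ) : E :=
  ∑ k, ((gram ℝ v)⁻¹ *ᵥ z) k • v k

theorem inner_minNormSolution {v : κ → E} (hv : LinearIndependent ℝ v) (z : κ → ℝ) (k : κ) :
    ⟪v k, minNormSolution v z⟫ = z k := by
  have hunit : IsUnit (gram ℝ v).det := (det_gram_ne_zero_iff_linearIndependent.2 hv).isUnit
  have hinner : ⟪v k, minNormSolution v z⟫ = (gram ℝ v *ᵥ ((gram ℝ v)⁻¹ *ᵥ z)) k := by
    simp [minNormSolution, inner_sum, real_inner_smul_right, mulVec, dotProduct, mul_comm]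
  rw [hinner, mulVec_mulVec, mul_nonsing_inv _ hunit, one_mulVec]

theorem norm_sq_minNormSolution {v : κ → E} (hv : LinearIndependent ℝ v) (z : κ → ℝ) :
    ‖minNormSolution v z‖ ^ 2 = z ⬝ᵥ (gram ℝ v)⁻¹ *ᵥ z := by
  rw [← real_inner_self_eq_norm_sq]
  nth_rw 1 [minNormSolution]
  simp_rw [sum_inner, real_inner_smul_left, inner_minNormSolution hv]
  exact dotProduct_comm _ _

-- The minimum norm solution `u` of `⟪v j, u⟫ = δ_{jk}` is orthogonal to every `v j` with `j ≠ k`,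
-- so it is the projection of its component `(gram ℝ v)⁻¹ k k • v k`; now pair it with `v k`.
theorem gram_inv_apply_self_mul_norm_sq_orthogonalProjectionOnto [FiniteDimensional ℝ E]
    {v : κ → E} (hv : LinearIndependent ℝ v) (k : κ) :
    (gram ℝ v)⁻¹ k k *
      ‖(Submodule.span ℝ (v '' {k}ᶜ))ᗮ.orthogonalProjectionOnto (v k)‖ ^ 2 = 1 := by
  set K := Submodule.span ℝ (v '' {k}ᶜ)
  set u := minNormSolution v (Pi.single k 1)
  have hu : u ∈ Kᗮ := by
    refine (Submodule.mem_orthogonal _ _).2 fun x hx => ?_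
    induction hx using Submodule.span_induction with
    | mem x hx =>
      obtain ⟨j, hj, rfl⟩ := hx
      rw [inner_minNormSolution hv, Pi.single_eq_of_ne hj]
    | zero => simp
    | add x y _ _ hx hy => rw [inner_add_left, hx, hy, add_zero]
    | smul a x _ hx => rw [real_inner_smul_left, hx, mul_zero]
  have hproj : Kᗮ.starProjection u = (gram ℝ v)⁻¹ k k • Kᗮ.starProjection (v k) := by
    simp only [u, minNormSolution, mulVec_single_one, map_sum, map_smul]
    refine Finset.sum_eq_single_of_mem k (Finset.mem_univ k) fun j _ hj => ?_
    have hmem : v j ∈ K := Submodule.subset_span ⟨j, hj, rfl⟩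
    rw [(Submodule.starProjection_apply_eq_zero_iff _).2 (K.le_orthogonal_orthogonal hmem),
      smul_zero]
  calc (gram ℝ v)⁻¹ k k * ‖Kᗮ.orthogonalProjectionOnto (v k)‖ ^ 2
      = ⟪v k, (gram ℝ v)⁻¹ k k • Kᗮ.starProjection (v k)⟫ := by
        rw [real_inner_smul_right, real_inner_comm]
        congr 1
        exact (Kᗮ.re_inner_starProjection_eq_normSq (v k)).symm
    _ = ⟪v k, u⟫ := by rw [← hproj, Kᗮ.starProjection_eq_self_iff.2 hu]
    _ = 1 := by rw [inner_minNormSolution hv, Pi.single_eq_same]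

theorem ofReal_gram_inv_apply_self_le [FiniteDimensional ℝ E] (v : κ → E) (k : κ) :
    ENNReal.ofReal ((gram ℝ v)⁻¹ k k) ≤ (ENNReal.ofReal
      (‖(Submodule.span ℝ (v '' {k}ᶜ))ᗮ.orthogonalProjectionOnto (v k)‖ ^ 2))⁻¹ := by
  by_cases hv : LinearIndependent ℝ v
  · rw [ENNReal.le_inv_iff_mul_le, ← ENNReal.ofReal_mul' (sq_nonneg _),
      gram_inv_apply_self_mul_norm_sq_orthogonalProjectionOnto hv, ENNReal.ofReal_one]
  · have hdet : (gram ℝ v).det = 0 := by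
      simpa using mt det_gram_ne_zero_iff_linearIndependent.1 hv
    simp [nonsing_inv_apply_not_isUnit, hdet]

theorem measurable_gram_inv_apply [MeasurableSpace E] [BorelSpace E] [SecondCountableTopology E]
    (i j : κ) : Measurable fun v : κ → E => (gram ℝ v)⁻¹ i j := by
  have hgram : Continuous fun v : κ → E => gram ℝ v :=
    continuous_matrix fun i j => by simpa using by fun_prop
  simp only [Matrix.inv_def, Ring.inverse_eq_inv', Matrix.smul_apply, smul_eq_mul]
  exact hgram.matrix_det.measurable.inv.mul (hgram.matrix_adjugate.matrix_elem i j).measurable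

end GramInverse

section InverseWishart

variable {κ E : Type*} [Fintype κ] [NormedAddCommGroup E] [InnerProductSpace ℝ E]
  [FiniteDimensional ℝ E]

theorem card_le_finrank_orthogonal_span_image_compl (v : κ → E) (k : κ) :
    finrank ℝ E + 1 ≤ Fintype.card κ + finrank ℝ (Submodule.span ℝ (v '' {k}ᶜ))ᗮ := by
  have hspan : finrank ℝ (Submodule.span ℝ (v '' {k}ᶜ)) + 1 ≤ Fintype.card κ := by
    classical
    have hle := finrank_span_finset_le_card (R := ℝ) (({k}ᶜ : Finset κ).image v)
    have hcard := Finset.card_image_le (s := ({k}ᶜ : Finset κ)) (f := v)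
    rw [Set.finrank, Finset.coe_image, Finset.coe_compl, Finset.coe_singleton] at hle
    have := Finset.card_add_card_compl {k}
    rw [Finset.card_singleton] at this
    omega
  have := (Submodule.span ℝ (v '' {k}ᶜ)).finrank_add_finrank_orthogonal
  omega

variable [DecidableEq κ] [MeasurableSpace E] [BorelSpace E]

theorem lintegral_gram_inv_apply_self_le (hE : Fintype.card κ + 1 < finrank ℝ E) (k : κ) :
    ∫⁻ v, ENNReal.ofReal ((gram ℝ v)⁻¹ k k) ∂Measure.pi (fun _ : κ => stdGaussian E) ≤
      ENNReal.ofReal (1 / (finrank ℝ E - Fintype.card κ - 1)) := by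
  have hslice : ∀ v : κ → E,
      ∫⁻ y, ENNReal.ofReal ((gram ℝ (Function.update v k y))⁻¹ k k) ∂stdGaussian E ≤
        ENNReal.ofReal (1 / (finrank ℝ E - Fintype.card κ - 1)) := fun v => by
    set K := Submodule.span ℝ (v '' {k}ᶜ)
    have hdim : finrank ℝ E + 1 ≤ Fintype.card κ + finrank ℝ Kᗮ :=
      card_le_finrank_orthogonal_span_image_compl v k
    have hdim' : (finrank ℝ E : ℝ) + 1 ≤ Fintype.card κ + finrank ℝ Kᗮ := mod_cast hdim
    have hE' : (Fintype.card κ : ℝ) + 1 < finrank ℝ E := mod_cast hE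
    have himage : ∀ y, Function.update v k y '' {k}ᶜ = v '' {k}ᶜ := fun y =>
      image_congr fun j hj => Function.update_of_ne hj _ _
    calc ∫⁻ y, ENNReal.ofReal ((gram ℝ (Function.update v k y))⁻¹ k k) ∂stdGaussian E
        ≤ ∫⁻ y, (ENNReal.ofReal (‖Kᗮ.orthogonalProjectionOnto y‖ ^ 2))⁻¹ ∂stdGaussian E :=
          lintegral_mono fun y => by
            have hle := ofReal_gram_inv_apply_self_le (Function.update v k y) k
            rwa [himage y, Function.update_self] at hle
      _ = ENNReal.ofReal (1 / (finrank ℝ Kᗮ - 2)) :=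
          lintegral_inv_sq_norm_orthogonalProjectionOnto_stdGaussian (by omega)
      _ ≤ ENNReal.ofReal (1 / (finrank ℝ E - Fintype.card κ - 1)) :=
          ENNReal.ofReal_le_ofReal (one_div_le_one_div_of_le (by linarith) (by linarith))
  rw [lintegral_pi_eq_lintegral_lintegral_update k (measurable_gram_inv_apply k k).ennreal_ofReal]
  exact (lintegral_mono hslice).trans_eq (by simp)

theorem lintegral_trace_gram_inv_le (hE : Fintype.card κ + 1 < finrank ℝ E) :
    ∫⁻ v, ENNReal.ofReal ((gram ℝ v)⁻¹.trace) ∂Measure.pi (fun _ : κ => stdGaussian E) ≤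
      ENNReal.ofReal (Fintype.card κ / (finrank ℝ E - Fintype.card κ - 1)) := by
  have htrace : ∀ v : κ → E, ENNReal.ofReal ((gram ℝ v)⁻¹.trace) =
      ∑ k, ENNReal.ofReal ((gram ℝ v)⁻¹ k k) := fun v =>
    ENNReal.ofReal_sum_of_nonneg fun k _ => (posSemidef_gram ℝ v).inv.diag_nonneg
  simp_rw [htrace]
  rw [lintegral_finsetSum _ fun k _ => (measurable_gram_inv_apply k k).ennreal_ofReal]
  refine (Finset.sum_le_sum fun k _ => lintegral_gram_inv_apply_self_le hE k).trans_eq ?_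
  rw [Finset.sum_const, Finset.card_univ, ← ENNReal.ofReal_nsmul, nsmul_eq_mul, mul_one_div]

end InverseWishart

section QuadraticForm

variable {κ : Type*} [Fintype κ]

theorem integrable_apply_mul_apply_stdGaussian (i j : κ) :
    Integrable (fun z : EuclideanSpace ℝ κ => z i * z j) (stdGaussian (EuclideanSpace ℝ κ)) := by
  have hcoord : ∀ i : κ,
      MemLp (fun z : EuclideanSpace ℝ κ => z i) 2 (stdGaussian (EuclideanSpace ℝ κ)) := fun i =>
    IsGaussian.memLp_two_id.continuousLinearMap_comp (EuclideanSpace.proj i : _ →L[ℝ] ℝ)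
  exact (hcoord i).integrable_mul (hcoord j)

theorem integral_apply_mul_apply_stdGaussian [DecidableEq κ] (i j : κ) :
    ∫ z : EuclideanSpace ℝ κ, z i * z j ∂stdGaussian (EuclideanSpace ℝ κ) =
      (1 : Matrix κ κ ℝ) i j := by
  have hcov := covarianceBilin_apply (μ := stdGaussian (EuclideanSpace ℝ κ))
    IsGaussian.memLp_two_id (EuclideanSpace.single i 1) (EuclideanSpace.single j 1)
  rw [covarianceBilin_stdGaussian, innerSL_apply_apply] at hcov
  simpa [integral_id_stdGaussian, EuclideanSpace.inner_single_left, one_apply, eq_comm]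
    using hcov.symm

theorem lintegral_dotProduct_mulVec_stdGaussian {A : Matrix κ κ ℝ} (hA : A.PosSemidef) :
    ∫⁻ z : EuclideanSpace ℝ κ, ENNReal.ofReal (z ⬝ᵥ A *ᵥ z) ∂stdGaussian (EuclideanSpace ℝ κ) =
      ENNReal.ofReal A.trace := by
  classical
  have hexpand : ∀ z : EuclideanSpace ℝ κ, z ⬝ᵥ A *ᵥ z = ∑ i, ∑ j, A i j * (z i * z j) :=
    fun z => by
      simp only [dotProduct, mulVec, Finset.mul_sum]
      congr! 2
      ring
  have hint : ∀ i j, Integrable (fun z : EuclideanSpace ℝ κ => A i j * (z i * z j))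
      (stdGaussian (EuclideanSpace ℝ κ)) := fun i j =>
    (integrable_apply_mul_apply_stdGaussian i j).const_mul _
  have hint' := fun i => integrable_finsetSum Finset.univ fun j _ => hint i j
  rw [← ofReal_integral_eq_lintegral_ofReal]
  · simp_rw [hexpand]
    rw [integral_finsetSum _ fun i _ => hint' i]
    simp_rw [integral_finsetSum _ fun j _ => hint _ j, integral_const_mul,
      integral_apply_mul_apply_stdGaussian, one_apply]
    simp [trace]
  · simpa only [hexpand] using integrable_finsetSum _ fun i _ => hint' i
  · exact ae_of_all _ fun z => by simpa using hA.dotProduct_mulVec_nonneg z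

end QuadraticForm

section OptimalRisk

variable {ι κ : Type*} [Fintype ι] [Fintype κ] {σ2 : ℝ}

/-- The regularized error `‖x - ∑ i, l i • xs i‖² + σ2 * ‖l‖²`, in Euclidean norms, of
reconstructing the point `x` from the sample `xs` with weights `l`. The norms are written out
because `κ → ℝ` and `ι → ℝ` carry the supremum norm. -/
def reconstructionError (σ2 : ℝ) (x : κ → ℝ) (xs : ι → κ → ℝ) (l : ι → ℝ) : ℝ :=
  (∑ j, (x j - (∑ i, l i • xs i) j) ^ 2) + σ2 * ∑ i, (l i) ^ 2

/-- The reconstruction error of the best weights for a given point and sample. Its expectation over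
Gaussian data is the quantity `Ē(Σ; σ²)`. -/
noncomputable def optimalRisk (σ2 : ℝ) (x : κ → ℝ) (xs : ι → κ → ℝ) : ℝ :=
  ⨅ l : ι → ℝ, reconstructionError σ2 x xs l

theorem reconstructionError_nonneg (hσ2 : 0 ≤ σ2) (x : κ → ℝ) (xs : ι → κ → ℝ) (l : ι → ℝ) :
    0 ≤ reconstructionError σ2 x xs l := by
  unfold reconstructionError
  positivity

theorem bddBelow_range_reconstructionError (hσ2 : 0 ≤ σ2) (x : κ → ℝ) (xs : ι → κ → ℝ) :
    BddBelow (range (reconstructionError σ2 x xs)) :=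
  ⟨0, forall_mem_range.2 (reconstructionError_nonneg hσ2 x xs)⟩

theorem optimalRisk_nonneg (hσ2 : 0 ≤ σ2) (x : κ → ℝ) (xs : ι → κ → ℝ) :
    0 ≤ optimalRisk σ2 x xs :=
  Real.iInf_nonneg (reconstructionError_nonneg hσ2 x xs)

theorem optimalRisk_sum_smul_le (hσ2 : 0 ≤ σ2) (l : ι → ℝ) (xs : ι → κ → ℝ) :
    optimalRisk σ2 (∑ i, l i • xs i) xs ≤ σ2 * ∑ i, (l i) ^ 2 :=
  (ciInf_le (bddBelow_range_reconstructionError hσ2 _ xs) l).trans_eq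
    (by simp [reconstructionError])

theorem measurable_optimalRisk (hσ2 : 0 ≤ σ2) :
    Measurable fun p : (κ → ℝ) × (ι → κ → ℝ) => optimalRisk σ2 p.1 p.2 := by
  refine UpperSemicontinuous.measurable (upperSemicontinuous_ciInf
    (fun p => bddBelow_range_reconstructionError hσ2 p.1 p.2) fun l =>
      Continuous.upperSemicontinuous ?_)
  simp only [reconstructionError, Finset.sum_apply, Pi.smul_apply]
  fun_prop

end OptimalRisk

section CramerWold

variable {Ω Ω' ι κ : Type*} [MeasurableSpace Ω] [MeasurableSpace Ω'] [Fintype ι] [Fintype κ]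

theorem exists_eq_dotProduct_add_sum_dotProduct (L : StrongDual ℝ ((κ → ℝ) × (ι → κ → ℝ))) :
    ∃ (w : κ → ℝ) (v : ι → κ → ℝ), ∀ p, L p = w ⬝ᵥ p.1 + ∑ i, v i ⬝ᵥ p.2 i := by
  classical
  have hdual : ∀ f : (κ → ℝ) →ₗ[ℝ] ℝ, ∃ w : κ → ℝ, ∀ x, f x = w ⬝ᵥ x := fun f =>
    ⟨(dotProductEquiv ℝ κ).symm f, fun x =>
      (LinearMap.congr_fun ((dotProductEquiv ℝ κ).apply_symm_apply f) x).symm⟩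
  obtain ⟨w, hw⟩ := hdual (L.toLinearMap ∘ₗ .inl ℝ (κ → ℝ) (ι → κ → ℝ))
  choose v hv using fun i =>
    hdual (L.toLinearMap ∘ₗ .inr ℝ (κ → ℝ) (ι → κ → ℝ) ∘ₗ .single ℝ (fun _ : ι => κ → ℝ) i)
  refine ⟨w, v, fun p => ?_⟩
  have hsum : p = (p.1, 0) + ∑ i, ((0 : κ → ℝ), (Pi.single i (p.2 i) : ι → κ → ℝ)) := by
    ext : 1
    · simp [Prod.fst_sum]
    · simp [Prod.snd_sum, Finset.univ_sum_single]
  rw [hsum, map_add, map_sum, ← hsum, ← hw]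
  simp only [← hv]
  rfl

theorem map_prodMk_eq_of_forall_map_dotProduct_eq {μ : Measure Ω} {ν : Measure Ω'}
    [IsFiniteMeasure μ] [IsFiniteMeasure ν] {X : Ω → κ → ℝ} {Xs : Ω → ι → κ → ℝ}
    {Y : Ω' → κ → ℝ} {Ys : Ω' → ι → κ → ℝ} (hX : Measurable X) (hXs : Measurable Xs)
    (hY : Measurable Y) (hYs : Measurable Ys)
    (h : ∀ (w : κ → ℝ) (v : ι → κ → ℝ),
      μ.map (fun ω => w ⬝ᵥ X ω + ∑ i, v i ⬝ᵥ Xs ω i) =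
        ν.map (fun ω => w ⬝ᵥ Y ω + ∑ i, v i ⬝ᵥ Ys ω i)) :
    μ.map (fun ω => (X ω, Xs ω)) = ν.map fun ω => (Y ω, Ys ω) := by
  refine Measure.ext_of_charFunDual (funext fun L => ?_)
  obtain ⟨w, v, hL⟩ := exists_eq_dotProduct_add_sum_dotProduct L
  rw [charFunDual_eq_charFun_map_one, charFunDual_eq_charFun_map_one,
    Measure.map_map (by fun_prop) (by fun_prop), Measure.map_map (by fun_prop) (by fun_prop)]
  simp only [Function.comp_def, hL, h]

end CramerWold

section WhiteNoise

theorem map_sum_inner_add_inner_stdGaussian {κ E F : Type*} [Fintype κ]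
    [NormedAddCommGroup E] [InnerProductSpace ℝ E] [FiniteDimensional ℝ E]
    [MeasurableSpace E] [BorelSpace E]
    [NormedAddCommGroup F] [InnerProductSpace ℝ F] [FiniteDimensional ℝ F]
    [MeasurableSpace F] [BorelSpace F] (a : κ → E) (b : F) :
    ((Measure.pi fun _ : κ => stdGaussian E).prod (stdGaussian F)).map
        (fun p => ∑ k, ⟪p.1 k, a k⟫ + ⟪p.2, b⟫) =
      gaussianReal 0 (∑ k, ‖a k‖ ^ 2 + ‖b‖ ^ 2).toNNReal := by
  refine Measure.ext_of_charFun (funext fun t => ?_)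
  have hfactor : ∀ p : (κ → E) × F,
      Complex.exp (t * (∑ k, ⟪p.1 k, a k⟫ + ⟪p.2, b⟫ : ℝ) * Complex.I) =
        (∏ k, Complex.exp (⟪p.1 k, t • a k⟫ * Complex.I)) *
          Complex.exp (⟪p.2, t • b⟫ * Complex.I) := fun p => by
    simp only [← Complex.exp_sum, ← Complex.exp_add, real_inner_smul_right, ← Finset.sum_mul,
      ← add_mul, ← Finset.mul_sum, Complex.ofReal_mul, Complex.ofReal_add, Complex.ofReal_sum,
      mul_add]
  rw [charFun_apply_real, integral_map (by fun_prop) (by fun_prop)]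
  simp_rw [hfactor]
  rw [integral_prod_mul (fun x : κ → E => ∏ k, Complex.exp (⟪x k, t • a k⟫ * Complex.I))
      fun y : F => Complex.exp (⟪y, t • b⟫ * Complex.I),
    integral_fintype_prod_eq_prod (fun k (x : E) => Complex.exp (⟪x, t • a k⟫ * Complex.I))]
  simp_rw [← charFun_apply, charFun_stdGaussian]
  rw [← Complex.exp_sum, ← Complex.exp_add, charFun_gaussianReal,
    Real.coe_toNNReal _ (by positivity)]
  simp only [norm_smul, Real.norm_eq_abs, Complex.ofReal_mul, mul_pow, ← Complex.ofReal_pow,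
    sq_abs, neg_div, Finset.sum_neg_distrib, ← Finset.sum_div, ← Finset.mul_sum]
  congr 1
  push_cast
  ring

end WhiteNoise

section ColoredNoise

/-- The law of standard Gaussian data: a family of vectors of `ℝ^ι` indexed by the coordinates
`m`, whose `i`-th entries together form the `i`-th sample, and an independent point of `ℝ^m`. -/
noncomputable def whiteNoise (ι m : Type*) [Fintype ι] [Fintype m] :
    Measure ((m → EuclideanSpace ℝ ι) × EuclideanSpace ℝ m) :=
  (Measure.pi fun _ => stdGaussian (EuclideanSpace ℝ ι)).prod (stdGaussian (EuclideanSpace ℝ m))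

instance {ι m : Type*} [Fintype ι] [Fintype m] : IsProbabilityMeasure (whiteNoise ι m) := by
  unfold whiteNoise
  infer_instance

variable {ι κ m : Type*} [Fintype m]

/-- Applies `Bᵀ` to the point and to each sample encoded by a value of the white noise: this turns
standard Gaussian data into Gaussian data of covariance `Bᵀ * B`. -/
def color (B : Matrix m κ ℝ) (p : (m → EuclideanSpace ℝ ι) × EuclideanSpace ℝ m) :
    (κ → ℝ) × (ι → κ → ℝ) :=
  (p.2 ᵥ* B, fun i => (fun k => p.1 k i) ᵥ* B)

theorem measurable_color (B : Matrix m κ ℝ) : Measurable (color (ι := ι) B) := by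
  unfold color vecMul dotProduct
  fun_prop

variable [Fintype ι] [Fintype κ]

theorem sum_sq_mulVec (B : Matrix m κ ℝ) (w : κ → ℝ) :
    ∑ k, (B *ᵥ w) k ^ 2 = w ⬝ᵥ (Bᴴ * B) *ᵥ w := by
  rw [conjTranspose_eq_transpose_of_trivial, ← mulVec_mulVec, dotProduct_mulVec, vecMul_transpose]
  simp only [dotProduct, sq]

theorem map_dotProduct_color_whiteNoise (B : Matrix m κ ℝ) (w : κ → ℝ) (v : ι → κ → ℝ) :
    (whiteNoise ι m).map (fun p => w ⬝ᵥ (color B p).1 + ∑ i, v i ⬝ᵥ (color B p).2 i) =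
      gaussianReal 0 (w ⬝ᵥ (Bᴴ * B) *ᵥ w + ∑ i, v i ⬝ᵥ (Bᴴ * B) *ᵥ v i).toNNReal := by
  have hadjoint : ∀ p : (m → EuclideanSpace ℝ ι) × EuclideanSpace ℝ m,
      w ⬝ᵥ (color B p).1 + ∑ i, v i ⬝ᵥ (color B p).2 i =
        ∑ k, ⟪p.1 k, WithLp.toLp 2 fun i => (B *ᵥ v i) k⟫ + ⟪p.2, WithLp.toLp 2 (B *ᵥ w)⟫ :=
    fun p => by
      simp only [color, dotProduct_comm _ (_ ᵥ* B), ← dotProduct_mulVec]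
      simp only [PiLp.inner_apply, dotProduct, RCLike.inner_apply, conj_trivial, mul_comm]
      rw [Finset.sum_comm, add_comm]
  simp_rw [hadjoint, ← sum_sq_mulVec]
  rw [whiteNoise, map_sum_inner_add_inner_stdGaussian]
  simp only [EuclideanSpace.norm_sq_eq, Real.norm_eq_abs, sq_abs]
  rw [Finset.sum_comm, add_comm]

theorem optimalRisk_color_le [DecidableEq m] {σ2 : ℝ} (hσ2 : 0 ≤ σ2) (B : Matrix m κ ℝ)
    {v : m → EuclideanSpace ℝ ι} (hv : LinearIndependent ℝ v) (z : EuclideanSpace ℝ m) :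
    optimalRisk σ2 (color B (v, z)).1 (color B (v, z)).2 ≤ σ2 * (z ⬝ᵥ (gram ℝ v)⁻¹ *ᵥ z) := by
  set l := minNormSolution v z
  have hsolve : ∑ i, l i • (fun k => v k i) = (z : m → ℝ) := by
    ext k
    rw [← inner_minNormSolution hv z k]
    simp [PiLp.inner_apply, l]
  have hinterp : ∑ i, l i • (color B (v, z)).2 i = (color B (v, z)).1 := by
    simp only [color, ← smul_vecMul, ← hsolve]
    exact (map_sum B.vecMulLinear _ _).symm
  rw [← hinterp, ← norm_sq_minNormSolution hv, EuclideanSpace.real_norm_sq_eq]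
  exact optimalRisk_sum_smul_le hσ2 l _

theorem lintegral_optimalRisk_color_whiteNoise_le
    (hm : Fintype.card m + 1 < Fintype.card ι) {σ2 : ℝ} (hσ2 : 0 ≤ σ2) (B : Matrix m κ ℝ) :
    ∫⁻ p, ENNReal.ofReal (optimalRisk σ2 (color B p).1 (color B p).2) ∂whiteNoise ι m ≤
      ENNReal.ofReal (σ2 * (Fintype.card m / (Fintype.card ι - Fintype.card m - 1))) := by
  classical
  have hindep : ∀ᵐ v ∂Measure.pi fun _ : m => stdGaussian (EuclideanSpace ℝ ι),
      LinearIndependent ℝ v :=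
    ae_linearIndependent_pi (fun _ hK => stdGaussian_submodule_eq_zero hK)
      (by rw [finrank_euclideanSpace]; omega)
  have hpoint : ∀ᵐ v ∂Measure.pi fun _ : m => stdGaussian (EuclideanSpace ℝ ι),
      ∫⁻ z, ENNReal.ofReal (optimalRisk σ2 (color B (v, z)).1 (color B (v, z)).2)
          ∂stdGaussian (EuclideanSpace ℝ m) ≤
        ENNReal.ofReal σ2 * ENNReal.ofReal (gram ℝ v)⁻¹.trace := by
    filter_upwards [hindep] with v hv
    rw [← lintegral_dotProduct_mulVec_stdGaussian (posSemidef_gram ℝ v).inv,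
      ← lintegral_const_mul' _ _ ENNReal.ofReal_ne_top]
    simp_rw [← ENNReal.ofReal_mul hσ2]
    exact lintegral_mono fun z => ENNReal.ofReal_le_ofReal (optimalRisk_color_le hσ2 B hv z)
  calc ∫⁻ p, ENNReal.ofReal (optimalRisk σ2 (color B p).1 (color B p).2) ∂whiteNoise ι m
      ≤ ∫⁻ v, ∫⁻ z, ENNReal.ofReal (optimalRisk σ2 (color B (v, z)).1 (color B (v, z)).2)
          ∂stdGaussian (EuclideanSpace ℝ m)
          ∂Measure.pi fun _ : m => stdGaussian (EuclideanSpace ℝ ι) := lintegral_prod_le _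
    _ ≤ ∫⁻ v, ENNReal.ofReal σ2 * ENNReal.ofReal (gram ℝ v)⁻¹.trace
          ∂Measure.pi fun _ : m => stdGaussian (EuclideanSpace ℝ ι) := lintegral_mono_ae hpoint
    _ ≤ ENNReal.ofReal (σ2 * (Fintype.card m / (Fintype.card ι - Fintype.card m - 1))) := by
        rw [lintegral_const_mul' _ _ ENNReal.ofReal_ne_top, ENNReal.ofReal_mul hσ2]
        gcongr
        simpa only [finrank_euclideanSpace] using lintegral_trace_gram_inv_le
          (κ := m) (E := EuclideanSpace ℝ ι) (by rwa [finrank_euclideanSpace])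

end ColoredNoise

section Gaussian

open scoped ComplexOrder MatrixOrder Matrix.Norms.L2Operator in
theorem exists_eq_conjTranspose_mul_self {𝕜 κ : Type*} [RCLike 𝕜] [Fintype κ] {A : Matrix κ κ 𝕜}
    (hA : A.PosSemidef) : ∃ B : Matrix κ κ 𝕜, A = Bᴴ * B := by
  classical
  exact CStarAlgebra.nonneg_iff_eq_star_mul_self.mp hA.nonneg

theorem underparametrized_gaussian_bound_general {ι κ Ω : Type*} [Fintype ι] [Fintype κ]
    (hcard : Fintype.card κ + 1 < Fintype.card ι) [MeasurableSpace Ω] (μ : Measure Ω)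
    [IsProbabilityMeasure μ] (Sig : Matrix κ κ ℝ) (hSig : Sig.PosSemidef) (σ2 : ℝ) (hσ2 : 0 ≤ σ2)
    (X : Ω → κ → ℝ) (Xi : ι → Ω → κ → ℝ) (hX : Measurable X) (hXi : ∀ i, Measurable (Xi i))
    (hgauss : ∀ (w : κ → ℝ) (v : ι → κ → ℝ),
      μ.map (fun ω => w ⬝ᵥ X ω + ∑ i, v i ⬝ᵥ Xi i ω) =
        gaussianReal 0 (w ⬝ᵥ Sig *ᵥ w + ∑ i, v i ⬝ᵥ Sig *ᵥ v i).toNNReal) :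
    Integrable (fun ω => optimalRisk σ2 (X ω) fun i => Xi i ω) μ ∧
      ∫ ω, optimalRisk σ2 (X ω) (fun i => Xi i ω) ∂μ ≤
        σ2 * Fintype.card κ / (Fintype.card ι - Fintype.card κ - 1) := by
  obtain ⟨B, rfl⟩ := exists_eq_conjTranspose_mul_self hSig
  have hXs : Measurable fun ω i => Xi i ω := measurable_pi_lambda _ hXi
  have hlaw : μ.map (fun ω => (X ω, fun i => Xi i ω)) = (whiteNoise ι κ).map (color B) :=
    map_prodMk_eq_of_forall_map_dotProduct_eq hX hXs (measurable_color B).fst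
      (measurable_color B).snd fun w v =>
        (hgauss w v).trans (map_dotProduct_color_whiteNoise B w v).symm
  have hmeas := measurable_optimalRisk (ι := ι) (κ := κ) hσ2
  have hnonneg : 0 ≤ᵐ[μ] fun ω => optimalRisk σ2 (X ω) fun i => Xi i ω :=
    ae_of_all _ fun _ => optimalRisk_nonneg hσ2 _ _
  have hrisk : AEStronglyMeasurable (fun ω => optimalRisk σ2 (X ω) fun i => Xi i ω) μ :=
    (hmeas.comp (hX.prodMk hXs)).aestronglyMeasurable
  have hbound : ∫⁻ ω, ENNReal.ofReal (optimalRisk σ2 (X ω) fun i => Xi i ω) ∂μ ≤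
      ENNReal.ofReal (σ2 * (Fintype.card κ / (Fintype.card ι - Fintype.card κ - 1))) := by
    rw [← lintegral_map hmeas.ennreal_ofReal (hX.prodMk hXs), hlaw,
      lintegral_map hmeas.ennreal_ofReal (measurable_color B)]
    exact lintegral_optimalRisk_color_whiteNoise_le hcard hσ2 B
  refine ⟨(lintegral_ofReal_ne_top_iff_integrable hrisk hnonneg).1
    (hbound.trans_lt ENNReal.ofReal_lt_top).ne, ?_⟩
  have hcard' : (Fintype.card κ : ℝ) + 1 < Fintype.card ι := mod_cast hcard
  rw [integral_eq_lintegral_of_nonneg_ae hnonneg hrisk, mul_div_assoc]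
  exact ENNReal.toReal_le_of_le_ofReal
    (mul_nonneg hσ2 (div_nonneg (Nat.cast_nonneg _) (by linarith))) hbound

end Gaussian

/-- **Underparametrized Gaussian bound.** Let `X, X₁,…,Xₙ` be i.i.d. `N(0,Σ)` in `ℝᵈ`
(characterized through joint linear marginals) with `Σ ≻ 0` and `n > d + 1`. Then the
optimal averaged excess risk of linear prediction rules satisfies
`Ē(Σ; σ²) = E[ inf_l { ‖X - Σᵢ lᵢXᵢ‖² + σ² ‖l‖² } ] ≤ σ² d/(n - d - 1)`. -/
theorem underparametrized_gaussian_bound (n d : ℕ) (hnd : d + 1 < n)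
    {Ω : Type*} [MeasurableSpace Ω] (μ : Measure Ω) [IsProbabilityMeasure μ]
    (Sig : Matrix (Fin d) (Fin d) ℝ) (hSig : Sig.PosDef) (σ2 : ℝ) (hσ2 : 0 ≤ σ2)
    (X : Ω → (Fin d → ℝ)) (Xi : Fin n → Ω → (Fin d → ℝ))
    (hXmeas : Measurable X) (hXimeas : ∀ i, Measurable (Xi i))
    (hgauss : ∀ (w : Fin d → ℝ) (v : Fin n → (Fin d → ℝ)),
      μ.map (fun ω => w ⬝ᵥ X ω + ∑ i, v i ⬝ᵥ Xi i ω) =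
        gaussianReal 0 (Real.toNNReal
          (w ⬝ᵥ Sig.mulVec w + ∑ i, v i ⬝ᵥ Sig.mulVec (v i))))
    (hint : Integrable
      (fun ω => ⨅ l : Fin n → ℝ,
        ((∑ j, (X ω j - (∑ i, l i • Xi i ω) j) ^ 2) + σ2 * ∑ i, (l i) ^ 2)) μ) :
    (∫ ω, ⨅ l : Fin n → ℝ,
        ((∑ j, (X ω j - (∑ i, l i • Xi i ω) j) ^ 2) + σ2 * ∑ i, (l i) ^ 2) ∂μ) ≤
      σ2 * (d : ℝ) / ((n : ℝ) - (d : ℝ) - 1) := by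
  simpa only [optimalRisk, reconstructionError, Fintype.card_fin] using
    (underparametrized_gaussian_bound_general (by simpa only [Fintype.card_fin] using hnd) μ Sig
      hSig.posSemidef σ2 hσ2 X Xi hXmeas hXimeas hgauss).2
end
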